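/- There exists a constant C₂ > 1 such that for every integer x ≥ 1 and every element W of the normal closure of R_t in F₅ with |W| ≤ x, W can be written as a product of at most C₂·x·2^x conjugates of elements of R_t ∪ R_t⁻¹. That is, the Dehn 2-function of the finite presentation of the group Γ_t is bounded from above by C₂·2^x·x. -/

import Mathlib

/-- The five-letter alphabet `{a, b, c, d, t}`. -/
inductive L5 : Type
  | a | b | c | d | t
  deriving DecidableEq

/-- The free group `F₅ = F(a, b, c, d, t)`. -/
abbrev F5 : Type := FreeGroup L5

def ga : F5 := FreeGroup.of L5.a
def gb : F5 := FreeGroup.of L5.b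
def gc : F5 := FreeGroup.of L5.c
def gd : F5 := FreeGroup.of L5.d
def gt : F5 := FreeGroup.of L5.t

/-- The HNN relators `t g t⁻¹ σ(g)⁻¹`, `g ∈ {a, b, c, d}`, where
`σ(a) = aca`, `σ(b) = d`, `σ(c) = b`, `σ(d) = c`. -/
def RHNN : Set F5 :=
  {gt * ga * gt⁻¹ * (ga * gc * ga)⁻¹, gt * gb * gt⁻¹ * gd⁻¹,
   gt * gc * gt⁻¹ * gb⁻¹, gt * gd * gt⁻¹ * gc⁻¹}

/-- The relator set of the finite presentation of the group `Γ_t`. -/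
def Rt : Set F5 :=
  {ga ^ 2, gb ^ 2, gc ^ 2, gd ^ 2, gb * gc * gd,
   (ga * gd) ^ 4, (ga * gd * ga * gc * ga * gc) ^ 4} ∪ RHNN

/-- `W` is a product of `L` conjugates of elements of `R ∪ R⁻¹`. -/
def IsProdConjPM {G : Type*} [Group G] (R : Set G) (L : ℕ) (W : G) : Prop :=
  ∃ f : Fin L → G,
    (∀ j, ∃ x r, r ∈ R ∧ (f j = x * r * x⁻¹ ∨ f j = x * r⁻¹ * x⁻¹)) ∧
    W = (List.ofFn f).prod



namespace Grig

/-! ### Area calculus -/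

theorem isProd_iff (L : ℕ) (W : F5) : IsProdConjPM Rt L W ↔
    ∃ l : List F5, l.length = L ∧
      (∀ y ∈ l, ∃ x r, r ∈ Rt ∧ (y = x * r * x⁻¹ ∨ y = x * r⁻¹ * x⁻¹)) ∧ W = l.prod := by
  constructor
  · rintro ⟨f, hf, rfl⟩
    refine ⟨List.ofFn f, by simp, ?_, rfl⟩
    intro y hy
    rw [List.mem_ofFn] at hy
    obtain ⟨j, rfl⟩ := hy
    exact hf j
  · rintro ⟨l, rfl, hl, rfl⟩
    refine ⟨l.get, fun j => hl _ (List.get_mem _ _), by rw [List.ofFn_get]⟩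

def Ar (n : ℕ) (W : F5) : Prop := ∃ L ≤ n, IsProdConjPM Rt L W

theorem Ar.mono {n m : ℕ} {W : F5} (h : Ar n W) (hnm : n ≤ m) : Ar m W := by
  obtain ⟨L, hL, h⟩ := h
  exact ⟨L, hL.trans hnm, h⟩

theorem Ar.one : Ar 0 1 := ⟨0, le_rfl, (isProd_iff _ _).2 ⟨[], by simp⟩⟩

theorem Ar.mul {n m : ℕ} {U V : F5} (hU : Ar n U) (hV : Ar m V) : Ar (n + m) (U * V) := by
  obtain ⟨L, hL, h⟩ := hU
  obtain ⟨L', hL', h'⟩ := hV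
  rw [isProd_iff] at h h'
  obtain ⟨l, h1, h2, h3⟩ := h
  obtain ⟨l', h1', h2', h3'⟩ := h'
  refine ⟨L + L', by omega, (isProd_iff _ _).2 ⟨l ++ l', by simp [h1, h1'], ?_, by simp [h3, h3']⟩⟩
  intro y hy
  rcases List.mem_append.1 hy with hy | hy
  · exact h2 y hy
  · exact h2' y hy

theorem Ar.of_mem {r : F5} (hr : r ∈ Rt) : Ar 1 r :=
  ⟨1, le_rfl, (isProd_iff _ _).2 ⟨[r], by simp, by
    intro y hy
    simp only [List.mem_singleton] at hy
    exact ⟨1, r, hr, by simp [hy]⟩, by simp⟩⟩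

theorem Ar.inv {n : ℕ} {U : F5} (hU : Ar n U) : Ar n U⁻¹ := by
  obtain ⟨L, hL, h⟩ := hU
  rw [isProd_iff] at h
  obtain ⟨l, h1, h2, rfl⟩ := h
  refine ⟨L, hL, (isProd_iff _ _).2 ⟨(l.map (·⁻¹)).reverse, by simp [h1], ?_, ?_⟩⟩
  · intro y hy
    simp only [List.mem_reverse, List.mem_map] at hy
    obtain ⟨z, hz, rfl⟩ := hy
    obtain ⟨x, r, hr, h | h⟩ := h2 z hz
    · exact ⟨x, r, hr, Or.inr (by rw [h]; group)⟩
    · exact ⟨x, r, hr, Or.inl (by rw [h]; group)⟩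
  · rw [List.prod_inv_reverse]

theorem prod_map_conj (g : F5) (l : List F5) :
    (l.map (fun y => g * y * g⁻¹)).prod = g * l.prod * g⁻¹ := by
  induction l with
  | nil => simp
  | cons x l ih => simp only [List.map_cons, List.prod_cons, ih]; group

theorem Ar.conj {n : ℕ} {U : F5} (hU : Ar n U) (g : F5) : Ar n (g * U * g⁻¹) := by
  obtain ⟨L, hL, h⟩ := hU
  rw [isProd_iff] at h
  obtain ⟨l, h1, h2, rfl⟩ := h
  refine ⟨L, hL, (isProd_iff _ _).2 ⟨l.map (fun y => g * y * g⁻¹), by simp [h1], ?_, ?_⟩⟩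
  · intro y hy
    simp only [List.mem_map] at hy
    obtain ⟨z, hz, rfl⟩ := hy
    obtain ⟨x, r, hr, h | h⟩ := h2 z hz
    · exact ⟨g * x, r, hr, Or.inl (by rw [h]; group)⟩
    · exact ⟨g * x, r, hr, Or.inr (by rw [h]; group)⟩
  · rw [prod_map_conj]

abbrev NN : Subgroup F5 := Subgroup.normalClosure Rt

theorem Ar.of_NN {W : F5} (h : W ∈ NN) : ∃ n, Ar n W := by
  induction h using Subgroup.closure_induction with
  | mem x hx =>
    obtain ⟨r, hr, hx⟩ := Group.mem_conjugatesOfSet_iff.1 hx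
    obtain ⟨g, rfl⟩ := isConj_iff.1 hx
    exact ⟨1, (Ar.of_mem hr).conj g⟩
  | one => exact ⟨0, Ar.one⟩
  | mul x y _ _ hx hy =>
    obtain ⟨n, hn⟩ := hx
    obtain ⟨m, hm⟩ := hy
    exact ⟨_, hn.mul hm⟩
  | inv x _ hx =>
    obtain ⟨n, hn⟩ := hx
    exact ⟨n, hn.inv⟩

def EQ (n : ℕ) (U V : F5) : Prop := Ar n (U * V⁻¹)

theorem EQ.mono {n m : ℕ} {U V : F5} (h : EQ n U V) (hnm : n ≤ m) : EQ m U V := Ar.mono h hnm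

theorem EQ.refl (U : F5) : EQ 0 U U := by
  unfold EQ; rw [mul_inv_cancel]; exact Ar.one

theorem EQ.symm {n : ℕ} {U V : F5} (h : EQ n U V) : EQ n V U := by
  have := Ar.inv h
  unfold EQ
  convert this using 1
  group

theorem EQ.trans {n m : ℕ} {U V W : F5} (h : EQ n U V) (h' : EQ m V W) : EQ (n + m) U W := by
  have := Ar.mul h h'
  unfold EQ
  convert this using 1
  group

theorem EQ.mul {n m : ℕ} {U V U' V' : F5} (h : EQ n U V) (h' : EQ m U' V') :
    EQ (n + m) (U * U') (V * V') := by
  have := Ar.mul (Ar.conj h' U) h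
  unfold EQ
  rw [add_comm]
  convert this using 1
  group

theorem EQ.mul_left {n : ℕ} {U V : F5} (h : EQ n U V) (g : F5) : EQ n (g * U) (g * V) := by
  simpa using (EQ.refl g).mul h

theorem EQ.mul_right {n : ℕ} {U V : F5} (h : EQ n U V) (g : F5) : EQ n (U * g) (V * g) := by
  simpa using h.mul (EQ.refl g)

theorem EQ.ar {n m : ℕ} {U V : F5} (h : EQ n U V) (h' : Ar m V) : Ar (n + m) U := by
  have := Ar.mul h h'
  convert this using 1
  group

theorem EQ.uniform {ι : Type} [Finite ι] (u v : ι → F5)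
    (h : ∀ i, (QuotientGroup.mk (u i) : F5 ⧸ NN) = QuotientGroup.mk (v i)) :
    ∃ c, ∀ i, EQ c (u i) (v i) := by
  have h1 : ∀ i, ∃ n, EQ n (u i) (v i) := fun i => by
    refine Ar.of_NN ?_
    have := QuotientGroup.eq.1 (h i).symm
    exact (Subgroup.normalClosure_normal (s := Rt)).mem_comm this
  choose n hn using h1
  cases nonempty_fintype ι
  exact ⟨∑ i, n i, fun i => (hn i).mono
    (Finset.single_le_sum (f := n) (fun _ _ => Nat.zero_le _) (Finset.mem_univ i))⟩

/-! ### Letters, words and the tree action -/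

inductive L4 : Type
  | a | b | c | d
  deriving DecidableEq

instance : Fintype L4 := ⟨{.a, .b, .c, .d}, fun x => by cases x <;> decide⟩

def actL : L4 → List Bool → List Bool
  | _, [] => []
  | .a, i :: v => (!i) :: v
  | .b, false :: v => false :: actL .a v
  | .b, true :: v => true :: actL .c v
  | .c, false :: v => false :: actL .a v
  | .c, true :: v => true :: actL .d v
  | .d, false :: v => false :: v
  | .d, true :: v => true :: actL .b v

@[simp] theorem actL_nil (g : L4) : actL g [] = [] := by cases g <;> rfl

@[simp] theorem actL_inv (g : L4) (v : List Bool) : actL g (actL g v) = v := by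
  induction v generalizing g with
  | nil => simp
  | cons i v ih => cases g <;> cases i <;> simp [actL, ih]

theorem act_bcd (v : List Bool) : actL .b (actL .c (actL .d v)) = v ∧
    actL .c (actL .d (actL .b v)) = v ∧ actL .d (actL .b (actL .c v)) = v := by
  induction v with
  | nil => simp
  | cons i v ih =>
    obtain ⟨h1, h2, h3⟩ := ih
    cases i <;> simp [actL, h1, h2, h3]

def actW (l : List L4) (v : List Bool) : List Bool := l.foldr actL v

@[simp] theorem actW_nil (v) : actW [] v = v := rfl
@[simp] theorem actW_cons (g l v) : actW (g :: l) v = actL g (actW l v) := rfl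
theorem actW_append (l l' v) : actW (l ++ l') v = actW l (actW l' v) := by
  simp [actW, List.foldr_append]

def Tr (l : List L4) : Prop := ∀ v, actW l v = v

def par : List L4 → Bool
  | [] => false
  | .a :: l => !(par l)
  | _ :: l => par l

/-- coordinate letters; `false` for the left coordinate. -/
def psi : Bool → L4 → List L4
  | _, .a => []
  | false, .b => [.a]
  | false, .c => [.a]
  | false, .d => []
  | true, .b => [.c]
  | true, .c => [.d]
  | true, .d => [.b]

def sec : Bool → List L4 → List L4
  | _, [] => []
  | s, .a :: l => sec (!s) l
  | s, g :: l => psi s g ++ sec s l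

theorem actL_psi (g : L4) (hg : g ≠ .a) (s : Bool) (v) :
    actL g (s :: v) = s :: actW (psi s g) v := by
  cases g <;> cases s <;> simp_all [actL, psi]

theorem par_cons (g : L4) (hg : g ≠ .a) (l) : par (g :: l) = par l := by
  cases g <;> simp_all [par]

theorem sec_cons (g : L4) (hg : g ≠ .a) (s l) : sec s (g :: l) = psi s g ++ sec s l := by
  cases g <;> simp_all [sec]

theorem actW_sec (l : List L4) (i : Bool) (v) :
    actW l (i :: v) = (i ^^ par l) :: actW (sec (i ^^ par l) l) v := by
  induction l with
  | nil => simp [par, sec]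
  | cons g l ih =>
    by_cases hg : g = .a
    · subst hg
      simp [par, sec, ih, actL]
    · rw [actW_cons, ih, actL_psi g hg, par_cons g hg, sec_cons g hg, actW_append]

theorem Tr_iff (l : List L4) : Tr l ↔ par l = false ∧ ∀ s, Tr (sec s l) := by
  constructor
  · intro h
    have hp : par l = false := by
      have := h [false]
      rw [actW_sec] at this
      simpa using (List.cons.inj this).1
    refine ⟨hp, fun s v => ?_⟩
    have := h (s :: v)
    rw [actW_sec, hp] at this
    simpa using (List.cons.inj this).2
  · rintro ⟨hp, h⟩ v
    cases v with
    | nil => 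
      clear hp h
      induction l with
      | nil => rfl
      | cons g l ih => simp [ih]
    | cons i v => rw [actW_sec, hp]; simpa using h i v

def sig : L4 → List L4
  | .a => [.a, .c, .a]
  | .b => [.d]
  | .c => [.b]
  | .d => [.c]

def phi : L4 → List L4
  | .a => [.d]
  | .b => []
  | .c => [.a]
  | .d => [.a]

/-! ### The finite quotient -/

abbrev P2 := Bool × Bool × Bool
abbrev P3 := Bool × P2 × P2

def st2 : L4 → P2 → P2
  | .a, (r, p) => (!r, p)
  | .b, (r, p0, p1) => if r then (r, p0, !p1) else (r, !p0, p1)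
  | .c, (r, p0, p1) => if r then (r, p0, !p1) else (r, !p0, p1)
  | .d, p => p

def st3 : L4 → P3 → P3
  | .a, (r, p) => (!r, p)
  | .b, (r, p0, p1) => if r then (r, st2 .c p0, st2 .a p1) else (r, st2 .a p0, st2 .c p1)
  | .c, (r, p0, p1) => if r then (r, st2 .d p0, st2 .a p1) else (r, st2 .a p0, st2 .d p1)
  | .d, (r, p0, p1) => if r then (r, st2 .b p0, p1) else (r, p0, st2 .b p1)

def ap2 (p : P2) (i j : Bool) : List Bool :=
  [i ^^ p.1, j ^^ (if i then p.2.2 else p.2.1)]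

def ap3 (p : P3) (i j k : Bool) : List Bool :=
  (i ^^ p.1) :: ap2 (if i then p.2.2 else p.2.1) j k

abbrev D8 := Bool × Bool × Bool

/-- left multiplication by `φ g`. -/
def stD : L4 → D8 → D8
  | .a, (x, y, z) => (x, !y, z ^^ x)
  | .b, q => q
  | .c, (x, y, z) => (!x, y, z)
  | .d, (x, y, z) => (!x, y, z)

def fD : P3 → D8
  | (r, (p, p0, p1), (q, q0, q1)) =>
    (q1 ^^ q0 ^^ q ^^ p1 ^^ p0 ^^ p, r,
      q ^^ p1 ^^ p0 ^^ (r && (q1 ^^ q0 ^^ q ^^ p1 ^^ p0 ^^ p)))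

theorem fD_step : ∀ (g : L4) (p : P3), fD (st3 g p) = stD g (fD p) := by decide +kernel

theorem ap3_step : ∀ (g : L4) (p : P3) (i j k : Bool), ap3 (st3 g p) i j k = actL g (ap3 p i j k) := by
  decide +kernel

theorem ap3_one : ∀ p : P3, (∀ i j k : Bool, ap3 p i j k = [i, j, k]) →
    p = (false, (false, false, false), (false, false, false)) := by
  decide +kernel

def portr (l : List L4) : P3 := l.foldr st3 (false, (false, false, false), (false, false, false))
def dval (l : List L4) : D8 := l.foldr stD (false, false, false)

theorem dval_portr (l : List L4) : fD (portr l) = dval l := by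
  induction l with
  | nil => rfl
  | cons g l ih =>
    simp only [portr, dval, List.foldr_cons] at *
    rw [fD_step, ih]

theorem ap3_portr (l : List L4) (i j k : Bool) : ap3 (portr l) i j k = actW l [i, j, k] := by
  induction l with
  | nil => simp [portr, ap3, ap2]
  | cons g l ih =>
    simp only [portr, actW, List.foldr_cons] at *
    rw [ap3_step, ih]

theorem dval_of_Tr {l : List L4} (h : Tr l) : dval l = (false, false, false) := by
  rw [← dval_portr, ap3_one (portr l) (fun i j k => by rw [ap3_portr, h])]
  rfl


/-! ### Triviality in the group implies triviality on the tree -/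

theorem par_sig (g : L4) (l : List L4) : par (sig g ++ l) = par l := by
  cases g <;> simp [sig, par]

theorem par_flatMap_sig (l : List L4) : par (l.flatMap sig) = false := by
  induction l with
  | nil => rfl
  | cons g l ih => rw [List.flatMap_cons, par_sig, ih]

theorem sec_true_sig (l : List L4) : sec true (l.flatMap sig) = l := by
  induction l with
  | nil => rfl
  | cons g l ih =>
    rw [List.flatMap_cons]
    cases g <;> simp [sig, sec, psi, ih]

theorem sec_false_sig (l : List L4) : sec false (l.flatMap sig) = l.flatMap phi := by
  induction l with
  | nil => rfl
  | cons g l ih =>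
    rw [List.flatMap_cons, List.flatMap_cons]
    cases g <;> simp [sig, sec, psi, phi, ih]

theorem Tr_nil : Tr [] := fun _ => rfl

theorem Tr_ad4 : Tr [.a, .d, .a, .d, .a, .d, .a, .d] := by
  rw [Tr_iff]
  refine ⟨rfl, fun s v => ?_⟩
  cases s <;> simp [sec, psi]

theorem Tr_adacac4 : Tr [.a, .d, .a, .c, .a, .c, .a, .d, .a, .c, .a, .c,
    .a, .d, .a, .c, .a, .c, .a, .d, .a, .c, .a, .c] := by
  rw [Tr_iff]
  refine ⟨rfl, fun s v => ?_⟩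
  cases s <;> simp [sec, psi]

theorem act_dada (v) : actL .d (actL .a (actL .d (actL .a v))) =
    actL .a (actL .d (actL .a (actL .d v))) := by
  have := Tr_ad4 (actL .d (actL .a (actL .d (actL .a v))))
  simp at this
  exact this.symm

def nfL : D8 → List L4
  | (x, y, z) => (if x then [.a] else []) ++ (if y then [.d] else []) ++
      (if z then [.a, .d, .a, .d] else [])

theorem act_phi_nf (g : L4) (q : D8) (v) : actW (phi g) (actW (nfL q) v) = actW (nfL (stD g q)) v := by
  obtain ⟨x, y, z⟩ := q
  cases g <;> cases x <;> cases y <;> cases z <;> simp [phi, nfL, stD, act_dada]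

theorem act_flatMap_phi (l : List L4) (v) : actW (l.flatMap phi) v = actW (nfL (dval l)) v := by
  induction l with
  | nil => simp [dval, nfL]
  | cons g l ih =>
    rw [List.flatMap_cons, actW_append, ih, act_phi_nf]
    rfl

theorem Tr_phi {l : List L4} (h : Tr l) : Tr (l.flatMap phi) := by
  intro v
  rw [act_flatMap_phi, dval_of_Tr h]
  simp [nfL]

theorem Tr_sig_iff (l : List L4) : Tr (l.flatMap sig) ↔ Tr l := by
  rw [Tr_iff]
  constructor
  · intro h
    have := h.2 true
    rwa [sec_true_sig] at this
  · intro h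
    refine ⟨par_flatMap_sig l, fun s => ?_⟩
    cases s
    · rw [sec_false_sig]; exact Tr_phi h
    · rw [sec_true_sig]; exact h

abbrev F4 := FreeGroup L4

def actH : F4 →* Equiv.Perm (List Bool) :=
  FreeGroup.lift (fun g => Function.Involutive.toPerm (actL g) (actL_inv g))

def mkF (l : List L4) : F4 := (l.map FreeGroup.of).prod

theorem mkF_append (l l') : mkF (l ++ l') = mkF l * mkF l' := by simp [mkF]
theorem mkF_cons (g l) : mkF (g :: l) = FreeGroup.of g * mkF l := by simp [mkF]
theorem mkF_nil : mkF [] = 1 := rfl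

theorem actH_of (g : L4) (v) : actH (FreeGroup.of g) v = actL g v := by
  rw [actH, FreeGroup.lift_apply_of]; rfl

theorem actH_mkF (l : List L4) (v) : actH (mkF l) v = actW l v := by
  induction l with
  | nil => simp [mkF]
  | cons g l ih => rw [mkF_cons, map_mul, Equiv.Perm.mul_apply, ih, actH_of]; rfl

theorem actH_mkF_one (l : List L4) : actH (mkF l) = 1 ↔ Tr l := by
  constructor
  · intro h v
    rw [← actH_mkF, h]; rfl
  · intro h
    ext1 v
    rw [actH_mkF, h]; rfl

def sigH : F4 →* F4 := FreeGroup.lift (fun g => mkF (sig g))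

theorem sigH_of (g : L4) : sigH (FreeGroup.of g) = mkF (sig g) := by simp [sigH]

theorem sigH_mkF (l : List L4) : sigH (mkF l) = mkF (l.flatMap sig) := by
  induction l with
  | nil => simp [mkF]
  | cons g l ih => rw [mkF_cons, map_mul, ih, sigH_of, List.flatMap_cons, mkF_append]

theorem pos_rep (w : F4) : ∃ l, actH w = actH (mkF l) ∧ actH (sigH w) = actH (sigH (mkF l)) := by
  induction w using FreeGroup.induction_on with
  | C1 => exact ⟨[], by simp [mkF]⟩
  | of x => exact ⟨[x], by simp [mkF]⟩
  | inv_of x _ =>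
    refine ⟨[x], ?_, ?_⟩
    · rw [map_inv, inv_eq_iff_mul_eq_one]
      ext1 v
      simp [mkF, actH_of]
    · rw [map_inv, map_inv, inv_eq_iff_mul_eq_one, ← map_mul, ← map_mul]
      have : FreeGroup.of x * mkF [x] = mkF [x, x] := by simp [mkF]
      rw [this, sigH_mkF, actH_mkF_one, Tr_sig_iff]
      intro v
      simp
  | mul x y hx hy =>
    obtain ⟨l, h1, h2⟩ := hx
    obtain ⟨l', h1', h2'⟩ := hy
    exact ⟨l ++ l', by rw [mkF_append, map_mul, map_mul, h1, h1'], by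
      rw [mkF_append, map_mul, map_mul, map_mul, map_mul, h2, h2']⟩

theorem ker_sig (w : F4) : actH (sigH w) = 1 ↔ actH w = 1 := by
  obtain ⟨l, h1, h2⟩ := pos_rep w
  rw [h1, h2, sigH_mkF, actH_mkF_one, actH_mkF_one, Tr_sig_iff]

abbrev Gam := F4 ⧸ actH.ker

def sigG : Gam →* Gam := QuotientGroup.map _ _ sigH (fun w hw => by
  rw [Subgroup.mem_comap, MonoidHom.mem_ker, ker_sig]; exact hw)

theorem sigG_inj : Function.Injective sigG := by
  rw [injective_iff_map_eq_one]
  intro w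
  induction w using QuotientGroup.induction_on with
  | H w =>
    intro h
    rw [sigG, QuotientGroup.map_mk, QuotientGroup.eq_one_iff, MonoidHom.mem_ker, ker_sig] at h
    rwa [QuotientGroup.eq_one_iff]

noncomputable def eqv : (⊤ : Subgroup Gam) ≃* sigG.range :=
  Subgroup.topEquiv.trans (MonoidHom.ofInjective sigG_inj)

abbrev HNN := HNNExtension Gam ⊤ sigG.range eqv

noncomputable def ofG (l : List L4) : HNN := HNNExtension.of (QuotientGroup.mk (mkF l) : Gam)

theorem ofG_append (l l') : ofG (l ++ l') = ofG l * ofG l' := by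
  rw [ofG, mkF_append, QuotientGroup.mk_mul, map_mul]; rfl

theorem ofG_eq_one (l) : ofG l = 1 ↔ Tr l := by
  rw [ofG, ← actH_mkF_one]
  rw [(injective_iff_map_eq_one' _).1 (HNNExtension.of_injective eqv), QuotientGroup.eq_one_iff, MonoidHom.mem_ker]

theorem t_ofG (l) : (HNNExtension.t : HNN) * ofG l = ofG (l.flatMap sig) * HNNExtension.t := by
  have := HNNExtension.t_mul_of (φ := eqv) ⟨(QuotientGroup.mk (mkF l) : Gam), Subgroup.mem_top _⟩
  have h2 : ((eqv ⟨(QuotientGroup.mk (mkF l) : Gam), Subgroup.mem_top _⟩ : sigG.range) : Gam)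
      = QuotientGroup.mk (mkF (l.flatMap sig)) := by
    rw [← sigH_mkF]; rfl
  rw [h2] at this
  exact this

def toL5 : L4 → L5
  | .a => .a
  | .b => .b
  | .c => .c
  | .d => .d

def ev (l : List L4) : F5 := (l.map (fun g => FreeGroup.of (toL5 g))).prod

theorem ev_append (l l') : ev (l ++ l') = ev l * ev l' := by simp [ev]
theorem ev_cons (g l) : ev (g :: l) = ev [g] * ev l := by simp [ev]
theorem ev_nil : ev [] = 1 := rfl

noncomputable def genH : L5 → HNN
  | .a => ofG [.a]
  | .b => ofG [.b]
  | .c => ofG [.c]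
  | .d => ofG [.d]
  | .t => HNNExtension.t

noncomputable def Theta : F5 →* HNN := FreeGroup.lift genH

theorem ofG_cons (g l) : ofG (g :: l) = ofG [g] * ofG l := ofG_append [g] l

theorem Theta_ev (l) : Theta (ev l) = ofG l := by
  induction l with
  | nil => simp [ev, ofG, mkF]
  | cons g l ih =>
    rw [ev_cons, map_mul, ih, ofG_cons]
    congr 1
    cases g <;> simp [ev, Theta, toL5, genH]

theorem Theta_t : Theta gt = HNNExtension.t := by simp [Theta, gt, genH]

theorem ga_eq : ga = ev [.a] := by simp [ev, ga, toL5]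
theorem gb_eq : gb = ev [.b] := by simp [ev, gb, toL5]
theorem gc_eq : gc = ev [.c] := by simp [ev, gc, toL5]
theorem gd_eq : gd = ev [.d] := by simp [ev, gd, toL5]

theorem Theta_hnn (g : L4) : Theta (gt * ev [g] * gt⁻¹ * (ev (sig g))⁻¹) = 1 := by
  simp only [map_mul, map_inv, Theta_t, Theta_ev]
  rw [t_ofG]
  simp

theorem Theta_Tr (l : List L4) (h : Tr l) : Theta (ev l) = 1 := by
  rw [Theta_ev, ofG_eq_one]; exact h

theorem Rt_cases {r : F5} (hr : r ∈ Rt) : (∃ l, Tr l ∧ r = ev l) ∨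
    ∃ g, r = gt * ev [g] * gt⁻¹ * (ev (sig g))⁻¹ := by
  simp only [Rt, RHNN, ga_eq, gb_eq, gc_eq, gd_eq, Set.mem_union, Set.mem_insert_iff,
    Set.mem_singleton_iff] at hr
  rcases hr with (h | h | h | h | h | h | h) | (h | h | h | h)
  · exact Or.inl ⟨[.a, .a], fun v => by simp, by rw [h]; simp [ev, pow_succ]⟩
  · exact Or.inl ⟨[.b, .b], fun v => by simp, by rw [h]; simp [ev, pow_succ]⟩
  · exact Or.inl ⟨[.c, .c], fun v => by simp, by rw [h]; simp [ev, pow_succ]⟩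
  · exact Or.inl ⟨[.d, .d], fun v => by simp, by rw [h]; simp [ev, pow_succ]⟩
  · exact Or.inl ⟨[.b, .c, .d], fun v => by simp [act_bcd], by rw [h]; simp [ev, mul_assoc]⟩
  · exact Or.inl ⟨_, Tr_ad4, by rw [h]; simp [ev, pow_succ, mul_assoc]⟩
  · exact Or.inl ⟨_, Tr_adacac4, by rw [h]; simp [ev, pow_succ, mul_assoc]⟩
  · exact Or.inr ⟨.a, by rw [h]; simp [ev, sig, mul_assoc]⟩
  · exact Or.inr ⟨.b, by rw [h]; simp [ev, sig, mul_assoc]⟩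
  · exact Or.inr ⟨.c, by rw [h]; simp [ev, sig, mul_assoc]⟩
  · exact Or.inr ⟨.d, by rw [h]; simp [ev, sig, mul_assoc]⟩

theorem NN_le : NN ≤ Theta.ker := by
  apply Subgroup.normalClosure_le_normal
  intro r hr
  rw [SetLike.mem_coe, MonoidHom.mem_ker]
  rcases Rt_cases hr with ⟨l, hl, rfl⟩ | ⟨g, rfl⟩
  · exact Theta_Tr l hl
  · exact Theta_hnn g

theorem Tr_of_NN {l : List L4} (h : ev l ∈ NN) : Tr l := by
  have := NN_le h
  rwa [MonoidHom.mem_ker, Theta_ev, ofG_eq_one] at this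


set_option linter.unusedSimpArgs false

/-! ### Relations in the quotient -/

abbrev QQ := F5 ⧸ NN

def qm : F5 →* QQ := QuotientGroup.mk' NN

def qa : QQ := qm ga
def qb : QQ := qm gb
def qc : QQ := qm gc
def qd : QQ := qm gd
def qt : QQ := qm gt

theorem qm_rel {r : F5} (hr : r ∈ Rt) : qm r = 1 :=
  (QuotientGroup.eq_one_iff r).2 (Subgroup.subset_normalClosure hr)

theorem qaa : qa * qa = 1 := by
  have := qm_rel (r := ga ^ 2) (by simp [Rt])
  simpa [pow_two, qa] using this
theorem qbb : qb * qb = 1 := by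
  have := qm_rel (r := gb ^ 2) (by simp [Rt])
  simpa [pow_two, qb] using this
theorem qcc : qc * qc = 1 := by
  have := qm_rel (r := gc ^ 2) (by simp [Rt])
  simpa [pow_two, qc] using this
theorem qdd : qd * qd = 1 := by
  have := qm_rel (r := gd ^ 2) (by simp [Rt])
  simpa [pow_two, qd] using this
theorem qbcd : qb * qc * qd = 1 := by
  have := qm_rel (r := gb * gc * gd) (by simp [Rt])
  simpa [qb, qc, qd] using this
theorem qad4 : (qa * qd) ^ 4 = 1 := by
  have := qm_rel (r := (ga * gd) ^ 4) (by simp [Rt])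
  simpa [qa, qd] using this
theorem qadacac4 : (qa * qd * qa * qc * qa * qc) ^ 4 = 1 := by
  have := qm_rel (r := (ga * gd * ga * gc * ga * gc) ^ 4) (by simp [Rt])
  simpa [qa, qd, qc] using this
theorem qta : qt * qa * qt⁻¹ = qa * qc * qa := by
  have := qm_rel (r := gt * ga * gt⁻¹ * (ga * gc * ga)⁻¹) (by simp [Rt, RHNN])
  rw [map_mul, map_inv, mul_inv_eq_one] at this
  simp only [map_mul, map_inv] at this
  exact this
theorem qtb : qt * qb * qt⁻¹ = qd := by
  have := qm_rel (r := gt * gb * gt⁻¹ * gd⁻¹) (by simp [Rt, RHNN])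
  rw [map_mul, map_inv, mul_inv_eq_one] at this
  simp only [map_mul, map_inv] at this
  exact this
theorem qtc : qt * qc * qt⁻¹ = qb := by
  have := qm_rel (r := gt * gc * gt⁻¹ * gb⁻¹) (by simp [Rt, RHNN])
  rw [map_mul, map_inv, mul_inv_eq_one] at this
  simp only [map_mul, map_inv] at this
  exact this
theorem qtd : qt * qd * qt⁻¹ = qc := by
  have := qm_rel (r := gt * gd * gt⁻¹ * gc⁻¹) (by simp [Rt, RHNN])
  rw [map_mul, map_inv, mul_inv_eq_one] at this
  simp only [map_mul, map_inv] at this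
  exact this

section grp
variable {G : Type*} [Group G]

theorem lassoc {x y z : G} (h : x * y = z) (w : G) : x * (y * w) = z * w := by
  rw [← mul_assoc, h]
theorem cancel2 {x : G} (h : x * x = 1) (w : G) : x * (x * w) = w := by
  rw [← mul_assoc, h, one_mul]

theorem v4 {b c d : G} (hb : b * b = 1) (hc : c * c = 1) (hd : d * d = 1) (h : b * c * d = 1) :
    b * c = d ∧ c * b = d ∧ b * d = c ∧ d * b = c ∧ c * d = b ∧ d * c = b := by
  have ib : b⁻¹ = b := inv_eq_of_mul_eq_one_left hb
  have ic : c⁻¹ = c := inv_eq_of_mul_eq_one_left hc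
  have id : d⁻¹ = d := inv_eq_of_mul_eq_one_left hd
  have h1 : b * c = d := by rw [← id]; exact eq_inv_of_mul_eq_one_left h
  have h2 : c * b = d := by rw [← id, ← h1, mul_inv_rev, ib, ic]
  refine ⟨h1, h2, ?_, ?_, ?_, ?_⟩
  · rw [← h1, ← mul_assoc, hb, one_mul]
  · rw [← h2, mul_assoc, hb, mul_one]
  · rw [← h2, ← mul_assoc, hc, one_mul]
  · rw [← h1, mul_assoc, hc, mul_one]

end grp

theorem ia : qa⁻¹ = qa := inv_eq_of_mul_eq_one_left qaa
theorem ib : qb⁻¹ = qb := inv_eq_of_mul_eq_one_left qbb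
theorem ic : qc⁻¹ = qc := inv_eq_of_mul_eq_one_left qcc
theorem id' : qd⁻¹ = qd := inv_eq_of_mul_eq_one_left qdd
theorem qbc : qb * qc = qd := (v4 qbb qcc qdd qbcd).1
theorem qcb : qc * qb = qd := (v4 qbb qcc qdd qbcd).2.1
theorem qbd : qb * qd = qc := (v4 qbb qcc qdd qbcd).2.2.1
theorem qdb : qd * qb = qc := (v4 qbb qcc qdd qbcd).2.2.2.1
theorem qcd : qc * qd = qb := (v4 qbb qcc qdd qbcd).2.2.2.2.1
theorem qdc : qd * qc = qb := (v4 qbb qcc qdd qbcd).2.2.2.2.2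

theorem qdada : qd * (qa * (qd * qa)) = qa * (qd * (qa * qd)) := by
  have h := qad4
  have h2 : (qa * (qd * (qa * qd))) * (qa * (qd * (qa * qd))) = 1 := by
    rw [← h]; simp only [pow_succ, pow_zero, one_mul, mul_assoc]
  have h3 := inv_eq_of_mul_eq_one_left h2
  simp only [mul_inv_rev, ia, id', mul_assoc] at h3
  exact h3

theorem qbadad : qb * (qa * (qd * (qa * qd))) = qc * (qa * (qd * qa)) := by
  rw [← qdada, ← mul_assoc, qbd]
theorem qcadad : qc * (qa * (qd * (qa * qd))) = qb * (qa * (qd * qa)) := by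
  rw [← qdada, ← mul_assoc, qcd]

/-- `ada` commutes with `c aca d aca c`. -/
theorem qcomm2 : Commute (qa * qd * qa)
    (qc * (qa * qc * qa) * qd * (qa * qc * qa) * qc) := by
  have h := qadacac4
  have hp : (qa * qd * qa)⁻¹ = qa * qd * qa := by simp only [mul_inv_rev, ia, id', mul_assoc]
  have hq : (qc * (qa * qc * qa) * qd * (qa * qc * qa) * qc)⁻¹ =
    qc * (qa * qc * qa) * qd * (qa * qc * qa) * qc := by
    simp only [mul_inv_rev, ia, id', ic, mul_assoc]
  set p := qa * qd * qa
  set q := qc * (qa * qc * qa) * qd * (qa * qc * qa) * qc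
  have h2 : (p * q) * (p * q) = 1 := by
    rw [← h]
    simp only [p, q, pow_succ, pow_zero, one_mul, mul_assoc, cancel2 qaa]
  have h3 := inv_eq_of_mul_eq_one_left h2
  rw [mul_inv_rev, hp, hq] at h3
  exact h3.symm

theorem qcomm1 : Commute (qa * qd * qa) qd := by
  show _ = _
  simp only [mul_assoc]
  exact qdada.symm

/-! ### Words -/

theorem qm_ev_nil : qm (ev []) = 1 := by simp [ev]
theorem qm_ev_a (l) : qm (ev (.a :: l)) = qa * qm (ev l) := by
  rw [ev_cons, map_mul, ← ga_eq]; rfl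
theorem qm_ev_b (l) : qm (ev (.b :: l)) = qb * qm (ev l) := by
  rw [ev_cons, map_mul, ← gb_eq]; rfl
theorem qm_ev_c (l) : qm (ev (.c :: l)) = qc * qm (ev l) := by
  rw [ev_cons, map_mul, ← gc_eq]; rfl
theorem qm_ev_d (l) : qm (ev (.d :: l)) = qd * qm (ev l) := by
  rw [ev_cons, map_mul, ← gd_eq]; rfl

theorem qm_t (l : List L4) : qm (ev (l.flatMap sig)) = qt * qm (ev l) * qt⁻¹ := by
  induction l with
  | nil => simp [ev]
  | cons g l ih =>
    rw [List.flatMap_cons, ev_append, map_mul, ih, ev_cons, map_mul]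
    have : qm (ev (sig g)) = qt * qm (ev [g]) * qt⁻¹ := by
      cases g
      · simp only [sig, qm_ev_a, qm_ev_c, qm_ev_nil, mul_one, qta]; simp only [mul_assoc]
      · simp only [sig, qm_ev_b, qm_ev_d, qm_ev_nil, mul_one, qtb]
      · simp only [sig, qm_ev_b, qm_ev_c, qm_ev_nil, mul_one, qtc]
      · simp only [sig, qm_ev_c, qm_ev_d, qm_ev_nil, mul_one, qtd]
    rw [this]
    group

def tau (l : List L4) : F5 := ga * ev (l.flatMap sig) * ga⁻¹

theorem tau_append (l l') : tau (l ++ l') = tau l * tau l' := by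
  simp only [tau, List.flatMap_append, ev_append]; group

def qx : QQ := qa * qt

theorem qm_tau (l : List L4) : qm (tau l) = qx * qm (ev l) * qx⁻¹ := by
  simp only [tau, map_mul, map_inv, qm_t, qx]
  change qa * _ * qa⁻¹ = _
  group

/-- multiplication of two letters, simplified. -/
def mm : L4 → L4 → List L4
  | .a, .a => []
  | .b, .b => []
  | .c, .c => []
  | .d, .d => []
  | .b, .c => [.d]
  | .c, .b => [.d]
  | .b, .d => [.c]
  | .d, .b => [.c]
  | .c, .d => [.b]
  | .d, .c => [.b]
  | g, h => [g, h]

theorem fact1 (g h : L4) : qm (ev [g, h]) = qm (ev (mm g h)) := by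
  cases g <;> cases h <;> simp only [mm, qm_ev_a, qm_ev_b, qm_ev_c, qm_ev_d, qm_ev_nil, mul_one,
    qaa, qbb, qcc, qdd, qbc, qcb, qbd, qdb, qcd, qdc]

theorem fact0 (g : L4) : qm (ev [g])⁻¹ = qm (ev [g]) := by
  rw [map_inv]
  cases g <;> simp only [qm_ev_a, qm_ev_b, qm_ev_c, qm_ev_d, qm_ev_nil, mul_one, ia, ib, ic, id']

theorem fact2 (g : L4) : qm (gt * ev [g] * gt⁻¹) = qm (ev (sig g)) := by
  have := qm_t [g]
  simp only [List.flatMap_cons, List.flatMap_nil, List.append_nil] at this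
  rw [this, map_mul, map_mul, map_inv]; rfl

inductive S4 : Type
  | s0 | s1 | s2 | s3
  deriving DecidableEq

instance : Fintype S4 := ⟨{.s0, .s1, .s2, .s3}, fun x => by cases x <;> decide⟩

def bs : S4 → List L4
  | .s0 => [.b]
  | .s1 => [.a, .b, .a]
  | .s2 => [.d, .a, .b, .a, .d]
  | .s3 => [.a, .d, .a, .b, .a, .d, .a]

def mv : L4 → S4 → S4
  | .a, .s0 => .s0
  | .a, .s1 => .s2
  | .a, .s2 => .s1
  | .a, .s3 => .s3
  | .b, s => s
  | .c, .s0 => .s1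
  | .c, .s1 => .s0
  | .c, .s2 => .s3
  | .c, .s3 => .s2
  | .d, .s0 => .s1
  | .d, .s1 => .s0
  | .d, .s2 => .s3
  | .d, .s3 => .s2

theorem fact4 (g : L4) (s : S4) :
    qm (ev (phi g) * ev (bs s)) = qm (ev (bs (mv g s)) * ev (phi g)) := by
  rw [← ev_append, ← ev_append]
  cases s <;> cases g <;>
    simp only [phi, bs, mv, List.cons_append, List.nil_append, List.append_nil, qm_ev_a, qm_ev_b,
      qm_ev_c, qm_ev_d, qm_ev_nil, mul_one,
    qaa, qbb, qcc, qdd, qbc, qcb, qbd, qdb, qcd, qdc, mul_assoc, cancel2 qaa, cancel2 qbb,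
    cancel2 qcc, cancel2 qdd, qdada, lassoc qbc, lassoc qbd, lassoc qcb, lassoc qcd, lassoc qdb,
    lassoc qdc, qbadad, qcadad]
  · have := congrArg (· * (qb * (qa * (qd * qa)))) qdada
    simp only [mul_assoc] at this
    rw [this, lassoc qdb]

theorem qx_a : qx * qa * qx⁻¹ = qc := by
  have := qta
  calc qx * qa * qx⁻¹ = qa * (qt * qa * qt⁻¹) * qa⁻¹ := by simp only [qx]; group
    _ = qc := by rw [qta, ia]; simp only [mul_assoc, cancel2 qaa, qaa, mul_one]

theorem qx_d : qx * qd * qx⁻¹ = qa * qc * qa := by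
  calc qx * qd * qx⁻¹ = qa * (qt * qd * qt⁻¹) * qa⁻¹ := by simp only [qx]; group
    _ = _ := by rw [qtd, ia]

theorem qx_b : qx * qb * qx⁻¹ = qa * qd * qa := by
  calc qx * qb * qx⁻¹ = qa * (qt * qb * qt⁻¹) * qa⁻¹ := by simp only [qx]; group
    _ = _ := by rw [qtb, ia]

theorem conj_list (l : List L4) (g : L4) : qx * qm (ev (g :: l)) * qx⁻¹ =
    qx * qm (ev [g]) * qx⁻¹ * (qx * qm (ev l) * qx⁻¹) := by
  rw [ev_cons, map_mul]; group

theorem qcdcomm : Commute qc qd := by show _ = _; rw [qcd, qdc]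

theorem conjc {y : QQ} (h : Commute y qd) : Commute (qc * y * qc) qd :=
  (qcdcomm.mul_left h).mul_left qcdcomm

theorem fact3b (s : S4) : Commute (qm (tau (bs s))) qd := by
  have h0 : qm (tau (bs .s0)) = qa * qd * qa := by
    rw [qm_tau, ← qx_b]; simp only [bs, qm_ev_b, qm_ev_nil, mul_one]
  have h1 : qm (tau (bs .s1)) = qc * qm (tau (bs .s0)) * qc := by
    simp only [qm_tau]
    conv_rhs => rw [← qx_a]
    simp only [bs, qm_ev_a, qm_ev_b, qm_ev_nil, mul_one]
    group
  have h2 : qm (tau (bs .s2)) = (qa * qc * qa) * qm (tau (bs .s1)) * (qa * qc * qa) := by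
    simp only [qm_tau]
    conv_rhs => rw [← qx_d]
    simp only [bs, qm_ev_a, qm_ev_b, qm_ev_d, qm_ev_nil, mul_one]
    group
  have h3 : qm (tau (bs .s3)) = qc * qm (tau (bs .s2)) * qc := by
    simp only [qm_tau]
    conv_rhs => rw [← qx_a]
    simp only [bs, qm_ev_a, qm_ev_b, qm_ev_d, qm_ev_nil, mul_one]
    group
  have c0 : Commute (qm (tau (bs .s0))) qd := by rw [h0]; exact qcomm1
  have c1 : Commute (qm (tau (bs .s1))) qd := by rw [h1]; exact conjc c0
  have c2 : Commute (qm (tau (bs .s2))) qd := by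
    have := (Commute.conj_iff (qa * qc * qa * qc)).2 qcomm2
    rw [h2, h1, h0]
    convert this using 1
    · simp only [mul_inv_rev, ia, ic, mul_assoc]
    · simp only [mul_inv_rev, ia, ic, mul_assoc, cancel2 qaa, cancel2 qcc, qcc, qaa, mul_one]
  have c3 : Commute (qm (tau (bs .s3))) qd := by rw [h3]; exact conjc c2
  cases s
  · exact c0
  · exact c1
  · exact c2
  · exact c3

theorem fact3 (g : L4) (s : S4) :
    qm (ev (sig g) * tau (bs s)) = qm (tau (bs (mv g s)) * ev (sig g)) := by
  have ha := fact4 .a s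
  have hd := fact4 .d s
  have hb := fact3b s
  have key : ∀ y : QQ, ∀ u v : QQ, y * u = v * y →
      (qx * y * qx⁻¹) * (qx * u * qx⁻¹) = (qx * v * qx⁻¹) * (qx * y * qx⁻¹) := by
    intro y u v h
    calc _ = qx * (y * u) * qx⁻¹ := by group
      _ = _ := by rw [h]; group
  have hd' : qc * qm (tau (bs s)) = qm (tau (bs (mv .d s))) * qc := by
    rw [map_mul, map_mul] at hd
    have := key _ _ _ hd
    simp only [phi, qm_ev_a, qm_ev_nil, mul_one, qx_a] at this
    rw [qm_tau, qm_tau, this]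
  cases g
  · rw [map_mul, map_mul] at ha
    have := key _ _ _ ha
    simp only [phi, qm_ev_d, qm_ev_nil, mul_one, qx_d] at this
    simp only [map_mul, qm_tau, sig, qm_ev_a, qm_ev_c, qm_ev_nil, mul_one]
    rw [← mul_assoc qa, this]
  · have h : mv .b s = s := by cases s <;> rfl
    rw [h]
    simp only [map_mul, sig, qm_ev_d, qm_ev_nil, mul_one]
    exact hb.symm
  · have h : mv .c s = mv .d s := by cases s <;> rfl
    rw [h]
    simp only [map_mul, sig, qm_ev_b, qm_ev_nil, mul_one]
    have hb' := fact3b (mv .d s)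
    rw [← qdc, mul_assoc, hd', ← mul_assoc, ← hb'.eq, mul_assoc]
  · simp only [map_mul, sig, qm_ev_c, qm_ev_nil, mul_one]
    exact hd'

theorem fact5 (g : L4) (q : D8) :
    qm (ev (phi g) * ev (nfL q)) = qm (ev (nfL (stD g q))) := by
  rw [← ev_append]
  have r : ∀ w, qd * (qa * (qd * (qa * w))) = qa * (qd * (qa * (qd * w))) := by
    intro w
    have := congrArg (· * w) qdada
    simpa only [mul_assoc] using this
  obtain ⟨x, y, z⟩ := q
  cases g <;> cases x <;> cases y <;> cases z <;>
  simp [phi, nfL, stD, qm_ev_a, qm_ev_d, qm_ev_nil, r, cancel2 qaa, cancel2 qdd, qaa, qdd, qdada]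

def bet : Bool → L4 → List (S4)
  | true, .b => [.s0]
  | true, .d => [.s0]
  | _, _ => []

def AA (s : Bool) : F5 := if s then ga else 1

theorem fact6 (s : Bool) (g : L4) (hg : g ≠ .a) :
    qm (AA s * ev [g] * AA s) =
      qm (tau ((bet s g).flatMap bs) * ev ((psi (!s) g).flatMap sig)) := by
  have h : qm ga = qa := rfl
  cases s <;> cases g <;> simp [AA, bet, psi, bs, sig, tau, qm_ev_a, qm_ev_b, qm_ev_c, qm_ev_d,
    qm_ev_nil, h, ia, mul_assoc, cancel2 qaa, lassoc qdc] at hg ⊢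

theorem fact6' (s : Bool) (g : L4) (hg : g ≠ .a) :
    qm (ev (psi s g)) =
      qm (ev ((bet s g).flatMap bs) * ev ((psi (!s) g).flatMap phi)) := by
  cases s <;> cases g <;> simp [bet, psi, bs, phi, qm_ev_a, qm_ev_b, qm_ev_c, qm_ev_d,
    qm_ev_nil, qbd] at hg ⊢

theorem factA : qm (ga * ga) = qm 1 := by
  rw [map_mul, map_one]; exact qaa


/-! ### Uniform constants -/

structure Cst (c : ℕ) : Prop where
  f0 : ∀ g, EQ c (ev [g])⁻¹ (ev [g])
  f1 : ∀ g h, EQ c (ev [g, h]) (ev (mm g h))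
  f2 : ∀ g, EQ c (gt * ev [g] * gt⁻¹) (ev (sig g))
  f3 : ∀ g s, EQ c (ev (sig g) * tau (bs s)) (tau (bs (mv g s)) * ev (sig g))
  f4 : ∀ g s, EQ c (ev (phi g) * ev (bs s)) (ev (bs (mv g s)) * ev (phi g))
  f5 : ∀ g q, EQ c (ev (phi g) * ev (nfL q)) (ev (nfL (stD g q)))
  f6 : ∀ s g, g ≠ .a → EQ c (AA s * ev [g] * AA s)
    (tau ((bet s g).flatMap bs) * ev ((psi (!s) g).flatMap sig))
  f7 : ∀ s g, g ≠ .a → EQ c (ev (psi s g))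
    (ev ((bet s g).flatMap bs) * ev ((psi (!s) g).flatMap phi))
  fA : EQ c (ga * ga) 1
  pos : 1 ≤ c

theorem exists_cst : ∃ c, Cst c := by
  obtain ⟨c0, h0⟩ := EQ.uniform (fun g : L4 => (ev [g])⁻¹) (fun g => ev [g]) fact0
  obtain ⟨c1, h1⟩ := EQ.uniform (fun p : L4 × L4 => ev [p.1, p.2]) (fun p => ev (mm p.1 p.2))
    (fun p => fact1 p.1 p.2)
  obtain ⟨c2, h2⟩ := EQ.uniform (fun g : L4 => gt * ev [g] * gt⁻¹) (fun g => ev (sig g)) fact2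
  obtain ⟨c3, h3⟩ := EQ.uniform (fun p : L4 × S4 => ev (sig p.1) * tau (bs p.2))
    (fun p => tau (bs (mv p.1 p.2)) * ev (sig p.1)) (fun p => fact3 p.1 p.2)
  obtain ⟨c4, h4⟩ := EQ.uniform (fun p : L4 × S4 => ev (phi p.1) * ev (bs p.2))
    (fun p => ev (bs (mv p.1 p.2)) * ev (phi p.1)) (fun p => fact4 p.1 p.2)
  obtain ⟨c5, h5⟩ := EQ.uniform (fun p : L4 × D8 => ev (phi p.1) * ev (nfL p.2))
    (fun p => ev (nfL (stD p.1 p.2))) (fun p => fact5 p.1 p.2)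
  obtain ⟨c6, h6⟩ := EQ.uniform (fun p : Bool × {g : L4 // g ≠ .a} =>
      AA p.1 * ev [p.2.1] * AA p.1)
    (fun p => tau ((bet p.1 p.2.1).flatMap bs) * ev ((psi (!p.1) p.2.1).flatMap sig))
    (fun p => fact6 p.1 p.2.1 p.2.2)
  obtain ⟨c7, h7⟩ := EQ.uniform (fun p : Bool × {g : L4 // g ≠ .a} => ev (psi p.1 p.2.1))
    (fun p => ev ((bet p.1 p.2.1).flatMap bs) * ev ((psi (!p.1) p.2.1).flatMap phi))
    (fun p => fact6' p.1 p.2.1 p.2.2)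
  obtain ⟨c8, h8⟩ := EQ.uniform (fun _ : Unit => ga * ga) (fun _ => 1) (fun _ => factA)
  refine ⟨c0 + c1 + c2 + c3 + c4 + c5 + c6 + c7 + c8 + 1, ?_⟩
  exact
  { f0 := fun g => (h0 g).mono (by omega)
    f1 := fun g h => (h1 (g, h)).mono (by omega)
    f2 := fun g => (h2 g).mono (by omega)
    f3 := fun g s => (h3 (g, s)).mono (by omega)
    f4 := fun g s => (h4 (g, s)).mono (by omega)
    f5 := fun g s => (h5 (g, s)).mono (by omega)
    f6 := fun s g hg => (h6 (s, ⟨g, hg⟩)).mono (by omega)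
    f7 := fun s g hg => (h7 (s, ⟨g, hg⟩)).mono (by omega)
    fA := (h8 ()).mono (by omega)
    pos := by omega }

/-! ### Reduction to alternating words -/

def consR (g : L4) : List L4 → List L4
  | [] => [g]
  | h :: l => mm g h ++ l

def red (l : List L4) : List L4 := l.foldr consR []

theorem consR_eq {c : ℕ} (hc : Cst c) (g l) : EQ c (ev (g :: l)) (ev (consR g l)) := by
  cases l with
  | nil => exact (EQ.refl _).mono (Nat.zero_le _)
  | cons h l =>
    have := (hc.f1 g h).mul_right (ev l)
    rw [← ev_append, ← ev_append] at this
    exact this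

theorem red_eq {c : ℕ} (hc : Cst c) (l) : EQ (c * l.length) (ev l) (ev (red l)) := by
  induction l with
  | nil => exact EQ.refl _
  | cons g l ih =>
    have h1 := ih.mul_left (ev [g])
    rw [← ev_cons, ← ev_cons] at h1
    have h2 := h1.trans (consR_eq hc g (red l))
    exact h2.mono (by simp only [List.length_cons]; nlinarith)

theorem mm_length (g h) : (mm g h).length ≤ 2 := by cases g <;> cases h <;> simp [mm]

theorem red_length (l) : (red l).length ≤ l.length := by
  induction l with
  | nil => simp [red]
  | cons g l ih =>
    have : (consR g (red l)).length ≤ (red l).length + 1 := by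
      cases red l with
      | nil => simp [consR]
      | cons h m =>
        have := mm_length g h
        simp only [consR, List.length_append, List.length_cons]
        omega
    simp only [List.length_cons]
    exact this.trans (by omega)

theorem act_mm (g h v) : actW (mm g h) v = actL g (actL h v) := by
  have hb := act_bcd (actL .b v)
  have hc := act_bcd (actL .c v)
  have hd := act_bcd (actL .d v)
  have h1 : actL .b (actL .c v) = actL .d v := by simpa using hd.1
  have h2 : actL .c (actL .d v) = actL .b v := by simpa using hb.2.1
  have h3 : actL .d (actL .b v) = actL .c v := by simpa using hc.2.2
  have h4 : actL .c (actL .b v) = actL .d v := by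
    have := congrArg (actL .c) hc.1
    have h := congrArg (actL .c) (congrArg (actL .b) (act_bcd v).1)
    simp at h
    exact h.symm
  have h5 : actL .d (actL .c v) = actL .b v := by
    have h := congrArg (actL .d) (congrArg (actL .c) (act_bcd v).2.1)
    simp at h
    exact h.symm
  have h6 : actL .b (actL .d v) = actL .c v := by
    have h := congrArg (actL .b) (congrArg (actL .d) (act_bcd v).2.2)
    simp at h
    exact h.symm
  cases g <;> cases h <;> simp [mm, h1, h2, h3, h4, h5, h6]

theorem act_red (l v) : actW (red l) v = actW l v := by
  induction l with
  | nil => rfl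
  | cons g l ih =>
    have : actW (consR g (red l)) v = actL g (actW (red l) v) := by
      cases red l with
      | nil => rfl
      | cons h m => rw [consR, actW_append, act_mm]; rfl
    rw [actW_cons, ← ih]
    exact this

abbrev Alt (l : List L4) : Prop := l.IsChain (fun x y => (x = .a ↔ y ≠ .a))

theorem alt_consR (g l) (h : Alt l) : Alt (consR g l) := by
  rcases l with _ | ⟨x, _ | ⟨y, l⟩⟩
  · simp [consR, Alt]
  · cases g <;> cases x <;> simp [consR, mm, Alt]
  · simp only [Alt, List.isChain_cons_cons] at h
    cases g <;> cases x <;> cases y <;> simp_all [consR, mm, Alt]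

theorem alt_red (l) : Alt (red l) := by
  induction l with
  | nil => simp [red, Alt]
  | cons g l ih => exact alt_consR g _ ih

theorem psi_length (s g) : (psi s g).length ≤ 1 := by cases s <;> cases g <;> simp [psi]

theorem sec_length_alt (l) (h : Alt l) : ∀ s, 2 * (sec s l).length ≤ l.length + 1 ∧
    (l.head? = some .a → 2 * (sec s l).length ≤ l.length) := by
  induction l with
  | nil => intro s; simp [sec]
  | cons g l ih =>
    intro s
    have hl : Alt l := h.tail
    by_cases hg : g = .a
    · subst hg
      have := (ih hl (!s)).1
      simp only [sec, List.length_cons]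
      omega
    · have hp := psi_length s g
      rw [sec_cons g hg]
      refine ⟨?_, fun h => absurd (by simpa using h) hg⟩
      simp only [List.length_append, List.length_cons]
      cases l with
      | nil => simp [sec]; omega
      | cons x l =>
        have hx : x = .a := by
          have := (List.isChain_cons_cons.1 h).1
          by_contra hx
          exact hg (this.2 hx)
        have := (ih hl s).2 (by simp [hx])
        simp only [List.length_cons] at this ⊢
        omega

theorem sec_length (l) : ∀ s, (sec s l).length ≤ l.length := by
  induction l with
  | nil => intro s; simp [sec]
  | cons g l ih =>
    intro s
    by_cases hg : g = .a
    · subst hg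
      have := ih (!s)
      simp only [sec, List.length_cons]
      omega
    · have hp := psi_length s g
      have := ih s
      rw [sec_cons g hg]
      simp only [List.length_append, List.length_cons]
      omega

/-! ### Splitting -/

theorem sig_t {c : ℕ} (hc : Cst c) (l) :
    EQ (c * l.length) (ev (l.flatMap sig)) (gt * ev l * gt⁻¹) := by
  induction l with
  | nil => simpa [ev] using EQ.refl 1
  | cons g l ih =>
    have h := (hc.f2 g).symm.mul ih
    rw [← ev_append] at h
    rw [ev_cons]
    have e : gt * ev [g] * gt⁻¹ * (gt * ev l * gt⁻¹) = gt * (ev [g] * ev l) * gt⁻¹ := by group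
    rw [e] at h
    exact h.mono (by simp only [List.length_cons]; nlinarith)

theorem push_phi {c : ℕ} (hc : Cst c) (g) (S : List S4) :
    EQ (c * S.length) (ev (phi g) * ev (S.flatMap bs))
      (ev ((S.map (mv g)).flatMap bs) * ev (phi g)) := by
  induction S with
  | nil => simpa [ev] using EQ.refl (ev (phi g))
  | cons s S ih =>
    have h1 := (hc.f4 g s).mul_right (ev (S.flatMap bs))
    have h2 := ih.mul_left (ev (bs (mv g s)))
    rw [List.flatMap_cons, List.map_cons, List.flatMap_cons, ev_append, ev_append]
    simp only [mul_assoc] at h1 h2 ⊢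
    exact (h1.trans h2).mono (by simp only [List.length_cons]; nlinarith)

theorem tau_nil : tau [] = 1 := by simp [tau, ev]

theorem push_sig {c : ℕ} (hc : Cst c) (g) (S : List S4) :
    EQ (c * S.length) (ev (sig g) * tau (S.flatMap bs))
      (tau ((S.map (mv g)).flatMap bs) * ev (sig g)) := by
  induction S with
  | nil => simpa [tau_nil] using EQ.refl (ev (sig g))
  | cons s S ih =>
    have h1 := (hc.f3 g s).mul_right (tau (S.flatMap bs))
    have h2 := ih.mul_left (tau (bs (mv g s)))
    rw [List.flatMap_cons, List.map_cons, List.flatMap_cons, tau_append, tau_append]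
    simp only [mul_assoc] at h1 h2 ⊢
    exact (h1.trans h2).mono (by simp only [List.length_cons]; nlinarith)

theorem push_one {c : ℕ} (hc : Cst c) (v : List L4) (hv : v.length ≤ 1) (S : List S4) :
    ∃ S' : List S4, S'.length = S.length ∧
      EQ (c * S.length) (ev (v.flatMap sig) * tau (S.flatMap bs))
        (tau (S'.flatMap bs) * ev (v.flatMap sig)) ∧
      EQ (c * S.length) (ev (v.flatMap phi) * ev (S.flatMap bs))
        (ev (S'.flatMap bs) * ev (v.flatMap phi)) := by
  rcases v with _ | ⟨g, _ | ⟨h, v⟩⟩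
  · refine ⟨S, rfl, ?_, ?_⟩
    · simpa [ev] using (EQ.refl (tau (S.flatMap bs))).mono (Nat.zero_le (c * S.length))
    · simpa [ev_nil] using (EQ.refl (ev (S.flatMap bs))).mono (Nat.zero_le (c * S.length))
  · refine ⟨S.map (mv g), by simp, ?_, ?_⟩
    · simpa using push_sig hc g S
    · simpa using push_phi hc g S
  · simp at hv

theorem bet_length (s g) : (bet s g).length ≤ 1 := by cases s <;> cases g <;> simp [bet]

theorem AA_sq {c : ℕ} (hc : Cst c) (s) : EQ c (AA s * AA s) 1 := by
  cases s
  · simpa [AA] using (EQ.refl 1).mono (Nat.zero_le c)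
  · simpa [AA] using hc.fA

theorem split {c : ℕ} (hc : Cst c) (l : List L4) : ∀ s, ∃ S : List S4, S.length ≤ l.length ∧
    EQ (2 * c * (l.length + 1) ^ 2) (AA s * ev l * AA (s ^^ par l))
      (tau (S.flatMap bs) * ev ((sec (!s) l).flatMap sig)) ∧
    EQ (2 * c * (l.length + 1) ^ 2) (ev (sec s l))
      (ev (S.flatMap bs) * ev ((sec (!s) l).flatMap phi)) := by
  induction l with
  | nil =>
    intro s
    refine ⟨[], by simp, ?_, ?_⟩
    · have := (AA_sq hc s).mono (show c ≤ 2 * c by omega)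
      simpa [sec, par, ev_nil, tau_nil] using this
    · simpa [sec, ev_nil] using (EQ.refl 1).mono (Nat.zero_le (2 * c))
  | cons g l ih =>
    intro s
    by_cases hg : g = .a
    · subst hg
      obtain ⟨S, h1, h2, h3⟩ := ih (!s)
      refine ⟨S, h1.trans (by simp), ?_, ?_⟩
      · have e : EQ c (AA s * ga) (AA (!s)) := by
          cases s
          · simpa [AA] using (EQ.refl ga).mono (Nat.zero_le c)
          · simpa [AA] using hc.fA
        have e2 := e.mul_right (ev l * AA ((!s) ^^ par l))
        simp only [mul_assoc] at e2 h2
        have e3 := e2.trans h2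
        have e4 : (s ^^ par (.a :: l)) = ((!s) ^^ par l) := by simp [par]
        rw [e4, ev_cons, ← ga_eq]
        simp only [mul_assoc, sec]
        exact e3.mono (by simp only [List.length_cons]; nlinarith)
      · simp only [sec]
        exact h3.mono (by simp only [List.length_cons]; gcongr; omega)
    · obtain ⟨S, h1, h2, h3⟩ := ih s
      obtain ⟨S', e1, e2, e3⟩ := push_one hc (psi (!s) g) (psi_length _ _) S
      have hb : c + (c + 2 * c * (l.length + 1) ^ 2 + c * S.length) ≤
          2 * c * ((g :: l).length + 1) ^ 2 := by
        simp only [List.length_cons]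
        have : c * S.length ≤ c * l.length := Nat.mul_le_mul_left _ h1
        nlinarith
      refine ⟨bet s g ++ S', ?_, ?_, ?_⟩
      · have := bet_length s g
        simp only [List.length_append, List.length_cons]; omega
      · have k1 := (((AA_sq hc s).mul_left (AA s * ev [g])).mul_right
          (ev l * AA (s ^^ par l))).symm
        have k2 := (hc.f6 s g hg).mul h2
        have k3 := (e2.mul_left (tau ((bet s g).flatMap bs))).mul_right
          (ev ((sec (!s) l).flatMap sig))
        rw [par_cons g hg, sec_cons g hg, ev_cons, List.flatMap_append, List.flatMap_append,
          tau_append, ev_append]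
        simp only [mul_assoc, one_mul] at k1 k2 k3 hb ⊢
        exact (k1.trans (k2.trans k3)).mono hb
      · have k2 := (hc.f7 s g hg).mul h3
        have k3 := (e3.mul_left (ev ((bet s g).flatMap bs))).mul_right
          (ev ((sec (!s) l).flatMap phi))
        rw [sec_cons g hg, sec_cons g hg, List.flatMap_append, List.flatMap_append,
          ev_append, ev_append, ev_append]
        simp only [mul_assoc] at k2 k3 hb ⊢
        exact (k2.trans k3).mono (by omega)

theorem phi_nf {c : ℕ} (hc : Cst c) (l) :
    EQ (c * l.length) (ev (l.flatMap phi)) (ev (nfL (dval l))) := by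
  induction l with
  | nil => simpa [dval, nfL] using EQ.refl (ev [])
  | cons g l ih =>
    have h1 := (ih.mul_left (ev (phi g))).trans (hc.f5 g (dval l))
    rw [List.flatMap_cons, ev_append]
    exact h1.mono (by simp only [List.length_cons]; nlinarith)

theorem bs_length (S : List S4) : (S.flatMap bs).length ≤ 7 * S.length := by
  induction S with
  | nil => simp
  | cons s S ih =>
    have : (bs s).length ≤ 7 := by cases s <;> simp [bs]
    simp only [List.flatMap_cons, List.length_append, List.length_cons]
    omega

theorem core {c : ℕ} (hc : Cst c) (l : List L4) (hT : Tr l) {A0 A1 : ℕ}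
    (h0 : Ar A0 (ev (sec false l))) (h1 : Ar A1 (ev (sec true l))) :
    Ar (A0 + A1 + 13 * c * (l.length + 1) ^ 2) (ev l) := by
  obtain ⟨hp, hs⟩ := (Tr_iff l).1 hT
  obtain ⟨S, s1, s2, s3⟩ := split hc l false
  simp only [AA, hp, Bool.not_false, Bool.xor_false, Bool.false_eq_true, if_false, one_mul,
    mul_one] at s2 s3
  have hR := sec_length l true
  have p1 := phi_nf hc (sec true l)
  rw [dval_of_Tr (hs true)] at p1
  have p2 : Ar (c * (sec true l).length) (ev ((sec true l).flatMap phi)) := by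
    simpa using p1.ar (m := 0) (by simpa [nfL, ev_nil] using Ar.one)
  have p3 : Ar (2 * c * (l.length + 1) ^ 2 + A0 + c * (sec true l).length)
      (ev (S.flatMap bs)) := by
    have := (s3.symm.ar h0).mul p2.inv
    simpa using this
  have p4 := ((sig_t hc (S.flatMap bs)).ar (p3.conj gt)).conj ga
  have p5 := (sig_t hc (sec true l)).ar (h1.conj gt)
  have p6 := s2.ar (p4.mul p5)
  refine p6.mono ?_
  have q1 : c * (sec true l).length ≤ c * l.length := Nat.mul_le_mul_left _ hR
  have q2 : c * (S.flatMap bs).length ≤ c * (7 * l.length) :=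
    Nat.mul_le_mul_left _ ((bs_length S).trans (by omega))
  have q3 : c * l.length ≤ c * (l.length + 1) ^ 2 := Nat.mul_le_mul_left _ (by nlinarith)
  nlinarith

theorem quad_bound : ∃ K, ∀ n, ∀ l : List L4, l.length = n → Tr l → Ar (K * (n - 1) ^ 2) (ev l) := by
  obtain ⟨c, hc⟩ := exists_cst
  refine ⟨252 * c, ?_⟩
  intro n
  induction n using Nat.strong_induction_on with
  | _ n ih =>
    intro l hl hT
    by_cases hn : n ≤ 1
    · rcases l with _ | ⟨g, _ | ⟨h, l⟩⟩
      · exact Ar.one.mono (Nat.zero_le _)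
      · exfalso
        have h1 := hT [true, false, false]
        have h2 := hT [false, false]
        cases g <;> simp [actL] at h1 h2
      · simp at hl; omega
    · have hm := red_length l
      have hTm : Tr (red l) := fun v => by rw [act_red]; exact hT v
      have r0 := (sec_length_alt _ (alt_red l) false).1
      have r1 := (sec_length_alt _ (alt_red l) true).1
      have hs := ((Tr_iff _).1 hTm).2
      have a0 := ih _ (by omega) (sec false (red l)) rfl (hs false)
      have a1 := ih _ (by omega) (sec true (red l)) rfl (hs true)
      have := (red_eq hc l).ar (core hc (red l) hTm a0 a1)
      refine this.mono ?_
      have y0 : 2 * ((sec false (red l)).length - 1) ≤ n - 1 := by omega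
      have y1 : 2 * ((sec true (red l)).length - 1) ≤ n - 1 := by omega
      have y2 : (red l).length + 1 ≤ 3 * (n - 1) := by omega
      have y3 : l.length ≤ 9 * (n - 1) ^ 2 := by
        have : l.length ≤ 2 * (n - 1) := by omega
        have : 1 ≤ n - 1 := by omega
        nlinarith
      generalize (sec false (red l)).length - 1 = x0 at y0 ⊢
      generalize (sec true (red l)).length - 1 = x1 at y1 ⊢
      generalize (red l).length = k at y2 ⊢
      generalize n - 1 = q at y0 y1 y2 y3 ⊢
      have z0 : 4 * x0 ^ 2 ≤ q ^ 2 := by nlinarith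
      have z1 : 4 * x1 ^ 2 ≤ q ^ 2 := by nlinarith
      have z2 : (k + 1) ^ 2 ≤ 9 * q ^ 2 := by nlinarith
      have : l.length + (252 * x0 ^ 2 + 252 * x1 ^ 2 + 13 * (k + 1) ^ 2) ≤ 252 * q ^ 2 := by
        linarith
      have := Nat.mul_le_mul_left c this
      linarith



/-! ### Collecting the stable letter -/

def sp : ℕ → L4 → List L4
  | 0, g => [g]
  | m + 1, g => (sp m g).flatMap sig

theorem sig_count (l : List L4) : (l.flatMap sig).count .a = 2 * l.count .a ∧
    (l.flatMap sig).length = l.length + 2 * l.count .a := by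
  induction l with
  | nil => simp
  | cons g l ih =>
    obtain ⟨h1, h2⟩ := ih
    rw [List.flatMap_cons, List.count_append, List.length_append, h1, h2]
    cases g <;> simp [sig] <;> omega

theorem sp_bound (m : ℕ) (g : L4) : (sp m g).count .a ≤ 2 ^ m ∧ (sp m g).length ≤ 2 * 2 ^ m := by
  induction m with
  | zero => cases g <;> simp [sp]
  | succ m ih =>
    obtain ⟨h1, h2⟩ := sig_count (sp m g)
    simp only [sp]
    rw [h1, h2, pow_succ]
    omega

theorem sp_eq {c : ℕ} (hc : Cst c) (m : ℕ) (g : L4) :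
    EQ (2 * c * 2 ^ m) (gt ^ m * ev [g] * (gt ^ m)⁻¹) (ev (sp m g)) := by
  induction m with
  | zero => simpa [sp] using (EQ.refl (ev [g])).mono (Nat.zero_le (2 * c))
  | succ m ih =>
    have h1 := (ih.mul_left gt).mul_right gt⁻¹
    have h2 := h1.trans (sig_t hc (sp m g)).symm
    have e : gt ^ (m + 1) * ev [g] * (gt ^ (m + 1))⁻¹
        = gt * (gt ^ m * ev [g] * (gt ^ m)⁻¹) * gt⁻¹ := by
      rw [pow_succ']; group
    rw [e]
    refine h2.mono ?_
    have := Nat.mul_le_mul_left c (sp_bound m g).2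
    rw [pow_succ]
    linarith

theorem letter_cases (y : L5 × Bool) : (∃ g, FreeGroup.mk [y] = ev [g]) ∨
    (∃ g, FreeGroup.mk [y] = (ev [g])⁻¹) ∨ y = (.t, true) ∨ y = (.t, false) := by
  obtain ⟨z, b⟩ := y
  cases z <;> cases b
  · exact Or.inr (Or.inl ⟨.a, rfl⟩)
  · exact Or.inl ⟨.a, rfl⟩
  · exact Or.inr (Or.inl ⟨.b, rfl⟩)
  · exact Or.inl ⟨.b, rfl⟩
  · exact Or.inr (Or.inl ⟨.c, rfl⟩)
  · exact Or.inl ⟨.c, rfl⟩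
  · exact Or.inr (Or.inl ⟨.d, rfl⟩)
  · exact Or.inl ⟨.d, rfl⟩
  · simp
  · simp

theorem mk_cons (y : L5 × Bool) (l) : FreeGroup.mk (y :: l) = FreeGroup.mk [y] * FreeGroup.mk l := by
  rw [FreeGroup.mul_mk]; rfl

theorem collect {c : ℕ} (hc : Cst c) (l : List (L5 × Bool)) : ∃ n P Q m k, ∃ w : List L4,
    n + P + Q = l.length ∧ m ≤ Q ∧ k + Q = m + P ∧
    w.count .a ≤ n * 2 ^ (max P Q) ∧ w.length ≤ 2 * n * 2 ^ (max P Q) ∧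
    EQ (4 * c * l.length * ((n + 1) * 2 ^ (max P Q))) (FreeGroup.mk l)
      ((gt ^ m)⁻¹ * ev w * gt ^ k) := by
  induction l with
  | nil =>
    refine ⟨0, 0, 0, 0, 0, [], by simp, by simp, by simp, by simp, by simp, ?_⟩
    have : EQ 0 (1 : F5) 1 := EQ.refl 1
    simpa [ev, FreeGroup.one_eq_mk] using this
  | cons y l ih =>
    obtain ⟨n, P, Q, m, k, w, h1, h2, h3, h4, h5, h6⟩ := ih
    have hlet : ∀ g, EQ c (FreeGroup.mk [y]) (ev [g]) →
        ∃ n P Q m k, ∃ w : List L4,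
        n + P + Q = (y :: l).length ∧ m ≤ Q ∧ k + Q = m + P ∧
        w.count .a ≤ n * 2 ^ (max P Q) ∧ w.length ≤ 2 * n * 2 ^ (max P Q) ∧
        EQ (4 * c * (y :: l).length * ((n + 1) * 2 ^ (max P Q))) (FreeGroup.mk (y :: l))
          ((gt ^ m)⁻¹ * ev w * gt ^ k) := by
      intro g hg
      have hmM : 2 ^ m ≤ 2 ^ (max P Q) := Nat.pow_le_pow_right (by norm_num) (by omega)
      obtain ⟨b1, b2⟩ := sp_bound m g
      refine ⟨n + 1, P, Q, m, k, sp m g ++ w, by simp; omega, h2, h3, ?_, ?_, ?_⟩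
      · rw [List.count_append]; linarith
      · rw [List.length_append]; linarith
      · have k1 := hg.mul h6
        have k2 := ((sp_eq hc m g).mul_left (gt ^ m)⁻¹).mul_right (ev w * gt ^ k)
        have e1 : (gt ^ m)⁻¹ * (gt ^ m * ev [g] * (gt ^ m)⁻¹) * (ev w * gt ^ k)
          = ev [g] * ((gt ^ m)⁻¹ * ev w * gt ^ k) := by group
        rw [e1] at k2
        have k3 := k1.trans k2
        rw [mk_cons, ev_append]
        have e2 : (gt ^ m)⁻¹ * (ev (sp m g) * ev w) * gt ^ k
          = (gt ^ m)⁻¹ * ev (sp m g) * (ev w * gt ^ k) := by group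
        rw [e2]
        refine k3.mono ?_
        simp only [List.length_cons]
        generalize 2 ^ (max P Q) = X at *
        have hX : 1 ≤ X := le_trans Nat.one_le_two_pow hmM
        have a1 : c * 2 ^ m ≤ c * X := Nat.mul_le_mul_left _ hmM
        have a2 : c * 1 ≤ c * X := Nat.mul_le_mul_left _ hX
        have a3 : 0 ≤ c * X * n := Nat.zero_le _
        have a4 : 0 ≤ c * X * l.length := Nat.zero_le _
        nlinarith
    rcases letter_cases y with ⟨g, hg⟩ | ⟨g, hg⟩ | hy | hy
    · exact hlet g (by rw [hg]; exact (EQ.refl _).mono (Nat.zero_le _))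
    · exact hlet g (by rw [hg]; exact hc.f0 g)
    · have ey : FreeGroup.mk [y] = gt := by rw [hy]; rfl
      rcases m with _ | m
      · obtain ⟨s1, s2⟩ := sig_count w
        have e1 : max P Q = P := by omega
        have e2 : max (P + 1) Q = P + 1 := by omega
        rw [e1] at h4 h5 h6
        refine ⟨n, P + 1, Q, 0, k + 1, w.flatMap sig, by simp; omega, h2, by omega, ?_, ?_, ?_⟩
        · rw [s1, e2, pow_succ]; linarith
        · rw [s2, e2, pow_succ]; linarith
        · have k1 := h6.mul_left gt
          have k2 := (sig_t hc w).symm.mul_right (gt ^ (k + 1))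
          have e3 : gt * ev w * gt⁻¹ * gt ^ (k + 1) = gt * ((gt ^ 0)⁻¹ * ev w * gt ^ k) := by
            rw [pow_succ']; group
          rw [e3] at k2
          have k3 := k1.trans k2
          rw [mk_cons, ey, e2]
          simp only [pow_zero, inv_one, one_mul] at k3 ⊢
          refine k3.mono ?_
          simp only [List.length_cons]
          rw [pow_succ]
          generalize 2 ^ P = X at *
          have a1 := Nat.mul_le_mul_left c h5
          have a3 : 0 ≤ c * X * n := Nat.zero_le _
          have a4 : 0 ≤ c * X * l.length := Nat.zero_le _
          have a5 : 0 ≤ c * X * n * l.length := Nat.zero_le _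
          nlinarith
      · have hM : 2 ^ (max P Q) ≤ 2 ^ (max (P + 1) Q) :=
          Nat.pow_le_pow_right (by norm_num) (by omega)
        refine ⟨n, P + 1, Q, m, k, w, by simp; omega, by omega, by omega, ?_, ?_, ?_⟩
        · exact h4.trans (Nat.mul_le_mul_left _ hM)
        · exact h5.trans (Nat.mul_le_mul_left _ hM)
        · have k1 := h6.mul_left gt
          have e3 : gt * ((gt ^ (m + 1))⁻¹ * ev w * gt ^ k) = (gt ^ m)⁻¹ * ev w * gt ^ k := by
            rw [pow_succ]; group
          rw [e3] at k1
          rw [mk_cons, ey]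
          refine k1.mono ?_
          simp only [List.length_cons]
          gcongr
          omega
    · have ey : FreeGroup.mk [y] = gt⁻¹ := by rw [hy]; rfl
      have hM : 2 ^ (max P Q) ≤ 2 ^ (max P (Q + 1)) :=
        Nat.pow_le_pow_right (by norm_num) (by omega)
      refine ⟨n, P, Q + 1, m + 1, k, w, by simp; omega, by omega, by omega, ?_, ?_, ?_⟩
      · exact h4.trans (Nat.mul_le_mul_left _ hM)
      · exact h5.trans (Nat.mul_le_mul_left _ hM)
      · have k1 := h6.mul_left gt⁻¹
        have e3 : gt⁻¹ * ((gt ^ m)⁻¹ * ev w * gt ^ k) = (gt ^ (m + 1))⁻¹ * ev w * gt ^ k := by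
          rw [pow_succ]; group
        rw [e3] at k1
        rw [mk_cons, ey]
        refine k1.mono ?_
        simp only [List.length_cons]
        gcongr
        omega

theorem Ar.mem {n : ℕ} {W : F5} (h : Ar n W) : W ∈ NN := by
  obtain ⟨L, hL, h⟩ := h
  rw [isProd_iff] at h
  obtain ⟨l, -, h2, rfl⟩ := h
  refine Subgroup.list_prod_mem _ fun y hy => ?_
  obtain ⟨x, r, hr, h | h⟩ := h2 y hy
  · rw [h]
    exact Subgroup.normalClosure_normal.conj_mem _ (Subgroup.subset_normalClosure hr) _
  · rw [h]
    exact Subgroup.normalClosure_normal.conj_mem _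
      (inv_mem (Subgroup.subset_normalClosure hr)) _

def tex : F5 →* Multiplicative ℤ :=
  FreeGroup.lift (fun x => if x = .t then Multiplicative.ofAdd 1 else 1)

theorem tex_ev (w : List L4) : tex (ev w) = 1 := by
  induction w with
  | nil => simp [ev_nil]
  | cons g w ih =>
    rw [ev_cons, map_mul, ih, mul_one]
    cases g <;> simp [ev, tex, toL5]

theorem tex_gt : tex gt = Multiplicative.ofAdd 1 := by simp [tex, gt]

theorem tex_NN {W : F5} (h : W ∈ NN) : tex W = 1 := by
  have : NN ≤ tex.ker := Subgroup.normalClosure_le_normal (fun r hr => by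
    rcases Rt_cases hr with ⟨l, -, rfl⟩ | ⟨g, rfl⟩
    · exact tex_ev l
    · change tex _ = 1
      simp [tex_ev])
  exact this h

theorem n_sq (n : ℕ) : n ^ 2 ≤ 2 * 2 ^ n := by
  rcases Nat.lt_or_ge n 4 with h | h
  · interval_cases n <;> norm_num
  · induction n, h using Nat.le_induction with
    | base => norm_num
    | succ n hn ih => rw [pow_succ 2]; nlinarith

theorem main_nat : ∃ C : ℕ, 2 ≤ C ∧ ∀ x, 1 ≤ x → ∀ W ∈ NN, FreeGroup.norm W ≤ x →
    Ar (C * x * 2 ^ x) W := by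
  obtain ⟨c, hc⟩ := exists_cst
  obtain ⟨K, hK⟩ := quad_bound
  refine ⟨4 * c + 8 * K + 2, by omega, ?_⟩
  intro x hx W hW hn
  obtain ⟨n, P, Q, m, k, w, h1, h2, h3, h4, h5, h6⟩ := collect hc W.toWord
  rw [FreeGroup.mk_toWord] at h6
  have hlen : W.toWord.length ≤ x := hn
  have hV : (gt ^ m)⁻¹ * ev w * gt ^ k ∈ NN := by
    have := mul_mem (inv_mem h6.mem) hW
    simpa using this
  have ht := tex_NN hV
  rw [map_mul, map_mul, tex_ev, map_inv, map_pow, map_pow, tex_gt, mul_one] at ht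
  have hmk : m = k := by
    rw [inv_mul_eq_one, ← ofAdd_nsmul, ← ofAdd_nsmul] at ht
    have := Multiplicative.ofAdd.injective ht
    simpa using this
  subst hmk
  have hPQ : P = Q := by omega
  subst hPQ
  rw [max_self] at h5 h6
  have hw : ev w ∈ NN := by
    have := Subgroup.normalClosure_normal.conj_mem _ hV (gt ^ m)
    convert this using 1
    group
  have hA := (hK _ w rfl (Tr_of_NN hw)).conj (gt ^ m)⁻¹
  rw [inv_inv] at hA
  refine (h6.ar hA).mono ?_
  have q1 : (n + 1) * 2 ^ P ≤ 2 ^ x := by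
    calc (n + 1) * 2 ^ P ≤ 2 ^ n * 2 ^ P := Nat.mul_le_mul_right _ Nat.lt_two_pow_self
      _ = 2 ^ (n + P) := by rw [pow_add]
      _ ≤ 2 ^ x := Nat.pow_le_pow_right (by norm_num) (by omega)
  have q2 : (w.length - 1) ^ 2 ≤ 8 * 2 ^ x := by
    calc (w.length - 1) ^ 2 ≤ (2 * n * 2 ^ P) ^ 2 := Nat.pow_le_pow_left (by omega) _
      _ = 4 * (n ^ 2 * 2 ^ (2 * P)) := by rw [mul_comm 2 P, pow_mul]; ring
      _ ≤ 4 * ((2 * 2 ^ n) * 2 ^ (2 * P)) := by gcongr; exact n_sq n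
      _ = 8 * 2 ^ (n + 2 * P) := by rw [pow_add]; ring
      _ ≤ 8 * 2 ^ x := by gcongr <;> omega
  have q3 : 4 * c * W.toWord.length * ((n + 1) * 2 ^ P) ≤ 4 * c * x * 2 ^ x := by gcongr
  have q4 : K * (w.length - 1) ^ 2 ≤ K * (8 * 2 ^ x) := Nat.mul_le_mul_left _ q2
  have q5 : K * (8 * 2 ^ x) * 1 ≤ K * (8 * 2 ^ x) * x := Nat.mul_le_mul_left _ hx
  have q6 : 0 ≤ x * 2 ^ x := Nat.zero_le _
  nlinarith

end Grig

/-- the Dehn 2-function of the finite presentation of `Γ_t`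
is bounded from above by `C₂ · 2ˣ · x`. -/
theorem gamma_t_dehn_function_upper_bound :
    ∃ C₂ : ℝ, 1 < C₂ ∧
      ∀ x : ℕ, 1 ≤ x →
        ∀ W ∈ Subgroup.normalClosure Rt, FreeGroup.norm W ≤ x →
          ∃ L : ℕ, (L : ℝ) ≤ C₂ * (x : ℝ) * 2 ^ (x : ℝ) ∧
            IsProdConjPM Rt L W := by
  obtain ⟨C, hC, h⟩ := Grig.main_nat
  refine ⟨C, by exact_mod_cast (show 1 < C by omega), ?_⟩
  intro x hx W hW hn
  obtain ⟨L, hL, hP⟩ := h x hx W hW hn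
  refine ⟨L, ?_, hP⟩
  rw [Real.rpow_natCast]
  exact_mod_cast hL
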